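/- arXiv:1705.01316 — 2 statements merged into one kernel-verified Lean document; each statement's English description precedes it below -/
import Mathlib

section
/- Let α > 0. For every pair of square-summable sequences a = (a_n)_{n≥1} and b = (b_n)_{n≥1} of nonnegative reals, the double series ∑_{m=1}^∞ ∑_{n=1}^∞ a_m b_n (mn)^{α−1/2} / max(m,n)^{2α} converges and is at most max(2/α, ζ(1+α)) · ‖a‖_{ℓ²} ‖b‖_{ℓ²}. -/
lemma sig_concave : ConcaveOn ℝ (Set.Ici (0:ℝ)) Real.sigmoid := by
  apply AntitoneOn.concaveOn_of_deriv (convex_Ici 0) continuous_sigmoid.continuousOn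
    differentiable_sigmoid.differentiableOn
  rw [Real.deriv_sigmoid]
  intro x hx y hy hxy
  simp only [interior_Ici, Set.mem_Ioi] at hx hy
  have h1 : Real.sigmoid 0 ≤ Real.sigmoid x := Real.sigmoid_le hx.le
  have h2 := Real.sigmoid_le hxy
  rw [Real.sigmoid_zero] at h1
  simp only
  nlinarith

/-- The gap function. -/
noncomputable def gapF (h α : ℝ) : ℝ := 1 / (1 + (1 - h) ^ α) - 1 / (1 + (1 + h) ^ α)

lemma gapF_eq (h α : ℝ) (h0 : 0 < h) (h1 : h < 1) :
    gapF h α = Real.sigmoid (α * (-Real.log (1 - h))) + Real.sigmoid (α * Real.log (1 + h)) - 1 := by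
  have e1 : 1 / (1 + (1 - h) ^ α) = Real.sigmoid (α * (-Real.log (1 - h))) := by
    rw [Real.sigmoid_def, Real.rpow_def_of_pos (by linarith), one_div]
    congr 3; ring
  have e2 : 1 / (1 + (1 + h) ^ α) = 1 - Real.sigmoid (α * Real.log (1 + h)) := by
    rw [← Real.sigmoid_neg, Real.sigmoid_def, Real.rpow_def_of_pos (by linarith), one_div]
    congr 3; ring
  rw [gapF, e1, e2]; ring

lemma gapF_mono (h : ℝ) (h0 : 0 < h) (h1 : h < 1) {α β : ℝ} (hab : α ≤ β) :
    gapF h α ≤ gapF h β := by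
  rw [gapF_eq h _ h0 h1, gapF_eq h _ h0 h1]
  have l1 : 0 ≤ -Real.log (1 - h) := by
    have := Real.log_nonpos (x := 1 - h) (by linarith) (by linarith); linarith
  have l2 : 0 ≤ Real.log (1 + h) := Real.log_nonneg (by linarith)
  have := Real.sigmoid_le (mul_le_mul_of_nonneg_right hab l1)
  have := Real.sigmoid_le (mul_le_mul_of_nonneg_right hab l2)
  linarith

lemma gapF_chord (h : ℝ) (h0 : 0 < h) (h1 : h < 1) {α β t : ℝ} (ha : 0 ≤ α) (hb : 0 ≤ β)
    (t0 : 0 ≤ t) (t1 : t ≤ 1) :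
    (1 - t) * gapF h α + t * gapF h β ≤ gapF h ((1 - t) * α + t * β) := by
  rw [gapF_eq h _ h0 h1, gapF_eq h _ h0 h1, gapF_eq h _ h0 h1]
  have l1 : 0 ≤ -Real.log (1 - h) := by
    have := Real.log_nonpos (x := 1 - h) (by linarith) (by linarith); linarith
  have l2 : 0 ≤ Real.log (1 + h) := Real.log_nonneg (by linarith)
  have key : ∀ L : ℝ, 0 ≤ L → (1 - t) * Real.sigmoid (α * L) + t * Real.sigmoid (β * L)
      ≤ Real.sigmoid (((1 - t) * α + t * β) * L) := by
    intro L hL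
    have := sig_concave.2 (Set.mem_Ici.2 (by positivity : 0 ≤ α * L))
      (Set.mem_Ici.2 (by positivity : 0 ≤ β * L)) (by linarith : 0 ≤ 1 - t) t0 (by ring)
    simp only [smul_eq_mul] at this
    refine this.trans (le_of_eq ?_)
    congr 1; ring
  have := key _ l1
  have := key _ l2
  linarith

lemma gapF_zero (h : ℝ) : gapF h 0 = 0 := by simp [gapF]

lemma gapF_one (h : ℝ) (h0 : 0 < h) (h1 : h ≤ 1 / 2) : gapF h 1 = 2 * h / (4 - h ^ 2) := by
  have : (4 - h ^ 2) ≠ 0 := by nlinarith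
  have : (1 + (1 - h)) ≠ 0 := by linarith
  have : (1 + (1 + h)) ≠ 0 := by linarith
  simp only [gapF, Real.rpow_one]
  field_simp
  ring

lemma gapF_two (h : ℝ) (h0 : 0 < h) : gapF h 2 = 4 * h / (4 + h ^ 4) := by
  have : (4 + h ^ 4) ≠ 0 := by positivity
  have : (1 + (1 - h) ^ 2) ≠ 0 := by positivity
  have : (1 + (1 + h) ^ 2) ≠ 0 := by positivity
  simp only [gapF, Real.rpow_two]
  field_simp
  ring

lemma gapF_three (h : ℝ) (h0 : 0 < h) (h1 : h ≤ 1 / 2) : h ≤ gapF h 3 := by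
  have p0 : 0 < 1 - h := by linarith
  have e1 : 0 < (1 + (1 - h) ^ 3) := by positivity
  have e2 : 0 < (1 + (1 + h) ^ 3) := by positivity
  have r1 : (1 - h) ^ (3:ℝ) = (1 - h) ^ 3 := by exact_mod_cast Real.rpow_natCast (1 - h) 3
  have r2 : (1 + h) ^ (3:ℝ) = (1 + h) ^ 3 := by exact_mod_cast Real.rpow_natCast (1 + h) 3
  rw [gapF, r1, r2, div_sub_div _ _ e1.ne' e2.ne', le_div_iff₀ (by positivity)]
  have hh : h ^ 2 ≤ 1 / 4 := by nlinarith
  have h4 : h ^ 4 ≤ 1 / 16 := by nlinarith [sq_nonneg h]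
  have h6 : 0 ≤ h ^ 6 := by positivity
  have : 0 ≤ h * (2 - h ^ 2 - 3 * h ^ 4 + h ^ 6) := by
    apply mul_nonneg h0.le; linarith
  nlinarith

lemma gapF_one_ge (h : ℝ) (h0 : 0 < h) (h1 : h ≤ 1 / 2) : h / 2 ≤ gapF h 1 := by
  rw [gapF_one h h0 h1, le_div_iff₀ (by nlinarith)]
  nlinarith [pow_pos h0 3]

lemma gapF_two_ge (h : ℝ) (h0 : 0 < h) (h1 : h ≤ 1 / 2) : 64 / 65 * h ≤ gapF h 2 := by
  rw [gapF_two h h0, le_div_iff₀ (by positivity)]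
  have hh : h ^ 2 ≤ 1 / 4 := by nlinarith
  have h4 : h ^ 4 ≤ 1 / 16 := by nlinarith [sq_nonneg h]
  nlinarith

lemma gapF_mid (h : ℝ) (h0 : 0 < h) (h1 : h ≤ 1 / 2) (t : ℝ) (t0 : 0 ≤ t) (t1 : t ≤ 0.68) :
    (1 + t) / 2 * h ≤ gapF h (1 + t) := by
  have c := gapF_chord h h0 (by linarith) (α := 1) (β := 2) (by norm_num) (by norm_num) t0
    (by linarith)
  rw [show (1 - t) * 1 + t * 2 = 1 + t by ring] at c
  refine le_trans ?_ c
  rw [gapF_one h h0 h1, gapF_two h h0]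
  have hh : h ^ 2 ≤ 1 / 4 := by nlinarith
  have d1 : 0 < 4 - h ^ 2 := by linarith
  have d2 : 0 < 4 + h ^ 4 := by positivity
  have a1 : 2 * h / (4 - h ^ 2) = h / 2 + h * (h ^ 2 / (2 * (4 - h ^ 2))) := by field_simp; ring
  have a2 : 4 * h / (4 + h ^ 4) = h - h * (h ^ 4 / (4 + h ^ 4)) := by field_simp; ring
  have b1 : 0 ≤ h ^ 2 / (2 * (4 - h ^ 2)) := by positivity
  have b2 : h ^ 4 / (4 + h ^ 4) ≤ 0.47 * (h ^ 2 / (2 * (4 - h ^ 2))) := by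
    rw [← mul_div_assoc, div_le_div_iff₀ d2 (by positivity)]
    have : 0 ≤ h ^ 2 * (0.47 * (4 + h ^ 4) - h ^ 2 * (2 * (4 - h ^ 2))) := by
      apply mul_nonneg (by positivity)
      nlinarith [sq_nonneg h]
    nlinarith
  rw [a1, a2]
  set v := h ^ 2 / (2 * (4 - h ^ 2)) with hv
  set r := h ^ 4 / (4 + h ^ 4) with hr
  have b3 : t * r ≤ (1 - t) * v := by nlinarith
  nlinarith [mul_le_mul_of_nonneg_left b3 h0.le]

lemma gap_key (α C h : ℝ) (hα : 0 < α) (h0 : 0 < h) (h1 : h ≤ 1 / 2) (c1 : 2 / α ≤ C)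
    (c2 : 1 ≤ C) (c3 : α ≤ 2 → 1.1905 ≤ C) (c4 : α ≤ 3 → 65 / 64 ≤ C) :
    h ≤ C * gapF h α := by
  have c1' : 2 ≤ C * α := by rwa [div_le_iff₀ hα] at c1
  have hl : h < 1 := by linarith
  -- it suffices to have a linear lower bound
  have fin : ∀ k : ℝ, k * h ≤ gapF h α → 1 ≤ C * k → h ≤ C * gapF h α := by
    intro k hk hC
    have := mul_le_mul_of_nonneg_left hk (by linarith : 0 ≤ C)
    nlinarith
  rcases le_or_gt α 1 with a1 | a1
  · apply fin (α / 2) _ (by linarith)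
    have c := gapF_chord h h0 hl (α := 0) (β := 1) (by norm_num) (by norm_num) hα.le a1
    rw [gapF_zero] at c
    rw [show (1 - α) * 0 + α * 1 = α by ring] at c
    nlinarith [gapF_one_ge h h0 h1]
  rcases le_or_gt α 1.68 with a2 | a2
  · apply fin (α / 2) _ (by linarith)
    have c := gapF_mid h h0 h1 (α - 1) (by linarith) (by linarith)
    rw [show 1 + (α - 1) = α by ring] at c
    exact c
  rcases le_or_gt α 2 with a3 | a3
  · have := c3 a3
    apply fin 0.84 _ (by linarith)
    have c := gapF_mid h h0 h1 0.68 (by norm_num) (by norm_num)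
    refine le_trans ?_ (c.trans (gapF_mono h h0 hl (by linarith)))
    norm_num
  rcases le_or_gt α 3 with a4 | a4
  · have := c4 a4
    apply fin (64 / 65) _ (by linarith)
    exact (gapF_two_ge h h0 h1).trans (gapF_mono h h0 hl a3.le)
  · apply fin 1 _ (by linarith)
    rw [one_mul]
    exact (gapF_three h h0 h1).trans (gapF_mono h h0 hl a4.le)

/-- `q n = 1 / ((n+1)^α + n^α)`. -/
noncomputable def qF (α : ℝ) (i : ℕ) : ℝ := 1 / (((i : ℝ) + 1) ^ α + (i : ℝ) ^ α)

lemma qF_step (α C : ℝ) (hgap : ∀ h : ℝ, 0 < h → h ≤ 1 / 2 → h ≤ C * gapF h α)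
    (i : ℕ) (hi : 1 ≤ i) :
    ((i : ℝ) + 1) ^ (-(1 + α)) ≤ C * (qF α i - qF α (i + 1)) := by
  have hi' : (1 : ℝ) ≤ i := by exact_mod_cast hi
  set n : ℝ := (i : ℝ) + 1 with hn
  have np : 0 < n := by linarith
  have g := hgap (1 / n) (by positivity) (by
    apply one_div_le_one_div_of_le <;> linarith)
  have x1 : (i : ℝ) ^ α = n ^ α * (1 - 1 / n) ^ α := by
    rw [← Real.mul_rpow np.le]
    · congr 1; field_simp; linarith
    · rw [sub_nonneg, div_le_one np]; linarith
  have x2 : (n + 1) ^ α = n ^ α * (1 + 1 / n) ^ α := by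
    rw [← Real.mul_rpow np.le (by positivity)]
    congr 1; field_simp
  have pn : 0 < n ^ α := Real.rpow_pos_of_pos np _
  have e : qF α i - qF α (i + 1) = (n ^ α)⁻¹ * gapF (1 / n) α := by
    simp only [qF, gapF]
    push_cast
    rw [← hn, x1, x2, mul_sub]
    congr 1
    · simp only [one_div]; rw [← mul_inv]; congr 1; ring
    · simp only [one_div]; rw [← mul_inv]; congr 1; ring
  rw [e, neg_add, Real.rpow_add np, Real.rpow_neg_one, Real.rpow_neg np.le]
  rw [one_div] at g ⊢
  have := mul_le_mul_of_nonneg_left g (inv_nonneg.2 pn.le)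
  linarith

lemma qF_nonneg (α : ℝ) (i : ℕ) : 0 ≤ qF α i := by unfold qF; positivity

lemma tail_le (α C : ℝ) (hC : 0 ≤ C) (hgap : ∀ h : ℝ, 0 < h → h ≤ 1 / 2 → h ≤ C * gapF h α)
    (m : ℕ) (hm : 1 ≤ m) (N : ℕ) :
    ∑ i ∈ Finset.Ico m N, ((i : ℝ) + 1) ^ (-(1 + α)) ≤ C * qF α m := by
  rcases lt_or_ge N m with h | h
  · rw [Finset.Ico_eq_empty_of_le h.le]
    simpa using mul_nonneg hC (qF_nonneg α m)
  · have : ∑ i ∈ Finset.Ico m N, ((i : ℝ) + 1) ^ (-(1 + α)) ≤ C * (qF α m - qF α N) := by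
      induction N, h using Nat.le_induction with
      | base => simp
      | succ k hk ih =>
        rw [Finset.sum_Ico_succ_top hk]
        have := qF_step α C hgap k (hm.trans hk)
        linarith
    have := mul_nonneg hC (qF_nonneg α N)
    linarith

lemma row_le (α C : ℝ) (hα : 0 < α) (hC : 0 ≤ C)
    (hgap : ∀ h : ℝ, 0 < h → h ≤ 1 / 2 → h ≤ C * gapF h α)
    (hz : ∀ N : ℕ, ∑ i ∈ Finset.range N, ((i : ℝ) + 1) ^ (-(1 + α)) ≤ C)
    (N : ℕ) (m : ℕ) (hm : 1 ≤ m) :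
    ∑ i ∈ Finset.range N, (min (m : ℝ) ((i : ℝ) + 1)) ^ (2 * α) * ((i : ℝ) + 1) ^ (-(1 + α))
      ≤ C * (m : ℝ) ^ α := by
  induction m, hm using Nat.le_induction with
  | base =>
    simp only [Nat.cast_one, Real.one_rpow, mul_one]
    refine le_trans (le_of_eq ?_) (hz N)
    apply Finset.sum_congr rfl
    intro i _
    rw [min_eq_left (by linarith [Nat.cast_nonneg (α := ℝ) i]), Real.one_rpow, one_mul]
  | succ m hm ih =>
    have m0 : (0 : ℝ) < m := by exact_mod_cast hm
    have pm : 0 < (m : ℝ) ^ α := Real.rpow_pos_of_pos m0 _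
    have pm1 : 0 < ((m : ℝ) + 1) ^ α := Real.rpow_pos_of_pos (by linarith) _
    have hs : ∑ i ∈ Finset.range N, (min ((m + 1 : ℕ) : ℝ) ((i : ℝ) + 1)) ^ (2 * α)
          * ((i : ℝ) + 1) ^ (-(1 + α))
        = ∑ i ∈ Finset.range N, (min (m : ℝ) ((i : ℝ) + 1)) ^ (2 * α) * ((i : ℝ) + 1) ^ (-(1 + α))
          + (((m : ℝ) + 1) ^ (2 * α) - (m : ℝ) ^ (2 * α)) *
            ∑ i ∈ Finset.Ico m N, ((i : ℝ) + 1) ^ (-(1 + α)) := by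
      have hI : Finset.Ico m N = (Finset.range N).filter (fun i => m ≤ i) := by
        ext i; simp; tauto
      rw [hI, Finset.sum_filter, Finset.mul_sum, ← Finset.sum_add_distrib]
      apply Finset.sum_congr rfl
      intro i _
      push_cast
      split_ifs with hmi
      · have : (m : ℝ) ≤ i := by exact_mod_cast hmi
        rw [min_eq_left (by linarith), min_eq_left (by linarith)]
        ring
      · have : (i : ℝ) + 1 ≤ m := by exact_mod_cast (not_le.1 hmi)
        rw [min_eq_right (by linarith), min_eq_right (by linarith)]
        ring
    rw [hs]
    have ht := tail_le α C hC hgap m hm N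
    have sq1 : ((m : ℝ) + 1) ^ (2 * α) = (((m : ℝ) + 1) ^ α) ^ 2 := by
      rw [mul_comm, Real.rpow_mul (by linarith), Real.rpow_two]
    have sq2 : (m : ℝ) ^ (2 * α) = ((m : ℝ) ^ α) ^ 2 := by
      rw [mul_comm, Real.rpow_mul (by linarith), Real.rpow_two]
    have hle : (m : ℝ) ^ α ≤ ((m : ℝ) + 1) ^ α :=
      Real.rpow_le_rpow m0.le (by linarith) hα.le
    have hd : 0 ≤ ((m : ℝ) + 1) ^ (2 * α) - (m : ℝ) ^ (2 * α) := by
      rw [sq1, sq2]; nlinarith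
    have h2 := mul_le_mul_of_nonneg_left ht hd
    have h3 : (((m : ℝ) + 1) ^ (2 * α) - (m : ℝ) ^ (2 * α)) * (C * qF α m)
        = C * (((m : ℝ) + 1) ^ α - (m : ℝ) ^ α) := by
      rw [sq1, sq2, qF]
      field_simp
      ring
    push_cast
    linarith

/-- The Schur kernel. -/
noncomputable def PK (α : ℝ) (m n : ℕ+) : ℝ :=
  ((m : ℝ) ^ α)⁻¹ * ((min (m : ℝ) (n : ℝ)) ^ (2 * α) * (n : ℝ) ^ (-(1 + α)))

lemma PK_nonneg (α : ℝ) (m n : ℕ+) : 0 ≤ PK α m n := by unfold PK; positivity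

lemma PK_row (α C : ℝ) (hα : 0 < α) (hC : 0 ≤ C)
    (hgap : ∀ h : ℝ, 0 < h → h ≤ 1 / 2 → h ≤ C * gapF h α)
    (hz : ∀ N : ℕ, ∑ i ∈ Finset.range N, ((i : ℝ) + 1) ^ (-(1 + α)) ≤ C) (m : ℕ+) :
    Summable (PK α m) ∧ ∑' n, PK α m n ≤ C := by
  have m0 : (0 : ℝ) < m := by exact_mod_cast m.pos
  have pm : 0 < (m : ℝ) ^ α := Real.rpow_pos_of_pos m0 _
  set f : ℕ → ℝ := fun n => ((m : ℝ) ^ α)⁻¹ * ((min (m : ℝ) (n : ℝ)) ^ (2 * α) * (n : ℝ) ^ (-(1 + α)))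
    with hf
  have hb : ∀ N : ℕ, ∑ i ∈ Finset.range N, f (i + 1) ≤ C := by
    intro N
    have := row_le α C hα hC hgap hz N m m.pos
    simp only [hf]
    push_cast
    rw [← Finset.mul_sum, inv_mul_le_iff₀ pm]
    linarith
  have h0 : ∀ i, 0 ≤ f (i + 1) := by intro i; simp only [hf]; positivity
  have hs := summable_of_sum_range_le h0 hb
  have hfun : PK α m = fun n : ℕ+ => f n := rfl
  rw [hfun]
  refine ⟨(summable_pnat_iff_summable_succ (f := f)).2 hs, ?_⟩
  rw [tsum_pnat_eq_tsum_succ (f := f)]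
  exact Real.tsum_le_of_sum_range_le h0 hb

lemma PK_mul (α : ℝ) (m n : ℕ+) :
    √(PK α m n) * √(PK α n m) =
      ((m : ℝ) * (n : ℝ)) ^ (α - 1/2) / (max (m : ℝ) (n : ℝ)) ^ (2*α) := by
  have m0 : (0 : ℝ) < m := by exact_mod_cast m.pos
  have n0 : (0 : ℝ) < n := by exact_mod_cast n.pos
  have x0 : 0 < max (m : ℝ) n := by positivity
  have y0 : 0 < min (m : ℝ) n := by positivity
  rw [← Real.sqrt_mul (PK_nonneg _ _ _)]
  rw [Real.sqrt_eq_iff_eq_sq (mul_nonneg (PK_nonneg _ _ _) (PK_nonneg _ _ _)) (by positivity)]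
  have hxy : (m : ℝ) * n = min (m : ℝ) n * max (m : ℝ) n := (min_mul_max _ _).symm
  have e1 : PK α m n * PK α n m = (((m : ℝ) * n) ^ α)⁻¹ * (min (m : ℝ) n) ^ (2 * α)
      * (min (m : ℝ) n) ^ (2 * α) * ((m : ℝ) * n) ^ (-(1 + α)) := by
    unfold PK
    rw [min_comm (n : ℝ) m, Real.mul_rpow m0.le n0.le, Real.mul_rpow m0.le n0.le, mul_inv]
    ring
  rw [e1, hxy]
  generalize min (m : ℝ) n = x at *
  generalize max (m : ℝ) n = y at *
  rw [← Real.rpow_two, Real.div_rpow (by positivity) (by positivity), ← Real.rpow_mul (by positivity),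
    ← Real.rpow_mul x0.le, Real.mul_rpow y0.le x0.le, Real.mul_rpow y0.le x0.le,
    Real.mul_rpow y0.le x0.le, mul_inv, ← Real.rpow_neg y0.le, ← Real.rpow_neg x0.le, div_eq_mul_inv,
    ← Real.rpow_neg x0.le]
  have L : x ^ (-α) * y ^ (-α) * x ^ (2 * α) * x ^ (2 * α) * (x ^ (-(1 + α)) * y ^ (-(1 + α)))
      = (x ^ (-α) * x ^ (2 * α) * x ^ (2 * α) * x ^ (-(1 + α))) * (y ^ (-α) * y ^ (-(1 + α))) := by
    ring
  rw [L, mul_assoc (x ^ _) (y ^ _) (y ^ _)]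
  simp only [← Real.rpow_add x0, ← Real.rpow_add y0]
  congr 2 <;> ring

lemma zeta_facts (α : ℝ) (hα : 0 < α) :
    (∀ N : ℕ, ∑ i ∈ Finset.range N, ((i : ℝ) + 1) ^ (-(1 + α)) ≤ ∑' n : ℕ+, (n : ℝ) ^ (-(1+α))) := by
  intro N
  have hs : Summable (fun n : ℕ => (n : ℝ) ^ (-(1 + α))) := Real.summable_nat_rpow.2 (by linarith)
  have := tsum_pnat_eq_tsum_succ (f := fun n : ℕ => (n : ℝ) ^ (-(1 + α)))
  rw [this]
  have hs' := (summable_nat_add_iff 1).2 hs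
  push_cast at hs' ⊢
  exact hs'.sum_le_tsum _ (fun i _ => by positivity)

lemma half_bound (α C : ℝ) (hC : 0 ≤ C)
    (hrow : ∀ m, Summable (PK α m) ∧ ∑' n, PK α m n ≤ C) (a : ℕ+ → ℝ)
    (ha : Summable fun n => a n ^ 2) :
    Summable (fun p : ℕ+ × ℕ+ => a p.1 ^ 2 * PK α p.1 p.2) ∧
    ∑' p : ℕ+ × ℕ+, a p.1 ^ 2 * PK α p.1 p.2 ≤ C * ∑' n, a n ^ 2 := by
  have hnn : ∀ p : ℕ+ × ℕ+, 0 ≤ a p.1 ^ 2 * PK α p.1 p.2 :=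
    fun p => mul_nonneg (sq_nonneg _) (PK_nonneg _ _ _)
  have hle : ∀ m, a m ^ 2 * ∑' n, PK α m n ≤ C * a m ^ 2 := fun m => by
    have := mul_le_mul_of_nonneg_left (hrow m).2 (sq_nonneg (a m)); linarith
  have hsm : Summable fun m => a m ^ 2 * ∑' n, PK α m n :=
    Summable.of_nonneg_of_le (fun m => mul_nonneg (sq_nonneg _) (tsum_nonneg (PK_nonneg α m))) hle
      (ha.mul_left C)
  have hs : Summable (fun p : ℕ+ × ℕ+ => a p.1 ^ 2 * PK α p.1 p.2) := by
    rw [summable_prod_of_nonneg hnn]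
    constructor
    · intro m
      exact Summable.mul_left (a m ^ 2) (hrow m).1
    · refine hsm.congr fun m => ?_
      exact tsum_mul_left.symm
  refine ⟨hs, ?_⟩
  rw [hs.tsum_prod]
  have e : ∀ m, ∑' n, a m ^ 2 * PK α m n = a m ^ 2 * ∑' n, PK α m n := fun m => tsum_mul_left
  rw [tsum_congr e, ← tsum_mul_left]
  exact hsm.tsum_le_tsum hle (ha.mul_left C)

/-- For `α > 0` and nonnegative square-summable sequences `a, b`, the double series
`∑_{m,n} a_m b_n (mn)^{α-1/2} / max(m,n)^{2α}` converges and is bounded by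
`max(2/α, ζ(1+α)) ‖a‖_{ℓ²} ‖b‖_{ℓ²}`. Here `ζ(1+α) = ∑_{n≥1} n^{-(1+α)}`. -/
theorem bilinear_form_upper_bound (α : ℝ) (hα : 0 < α) (a b : ℕ+ → ℝ)
    (ha0 : ∀ n, 0 ≤ a n) (hb0 : ∀ n, 0 ≤ b n)
    (ha : Summable fun n => a n ^ 2) (hb : Summable fun n => b n ^ 2) :
    Summable (fun p : ℕ+ × ℕ+ =>
      a p.1 * b p.2 * ((p.1 : ℝ) * (p.2 : ℝ)) ^ (α - 1/2) / (max (p.1 : ℝ) (p.2 : ℝ)) ^ (2*α)) ∧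
    ∑' (m : ℕ+) (n : ℕ+),
        a m * b n * ((m : ℝ) * (n : ℝ)) ^ (α - 1/2) / (max (m : ℝ) (n : ℝ)) ^ (2*α)
      ≤ max (2/α) (∑' n : ℕ+, (n : ℝ) ^ (-(1+α))) *
          Real.sqrt (∑' n : ℕ+, a n ^ 2) * Real.sqrt (∑' n : ℕ+, b n ^ 2) := by
  set Z := ∑' n : ℕ+, (n : ℝ) ^ (-(1+α)) with hZ
  set C := max (2/α) Z with hCdef
  have hzf : ∀ N : ℕ, ∑ i ∈ Finset.range N, ((i : ℝ) + 1) ^ (-(1 + α)) ≤ C := fun N =>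
    (zeta_facts α hα N).trans (le_max_right _ _)
  have c1 : 2 / α ≤ C := le_max_left _ _
  have c2 : 1 ≤ C := by simpa using hzf 1
  have c4 : α ≤ 3 → 65 / 64 ≤ C := by
    intro h3
    have h := hzf 2
    simp only [Finset.sum_range_succ, Finset.sum_range_zero] at h
    have e : ((1 : ℝ) + 1) ^ (-4 : ℝ) ≤ (1 + 1) ^ (-(1 + α)) :=
      Real.rpow_le_rpow_of_exponent_le (by norm_num) (by linarith)
    have e' : ((1 : ℝ) + 1) ^ (-4 : ℝ) = 1 / 16 := by
      rw [Real.rpow_neg (by norm_num)]; norm_num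
    norm_num at h e e' ⊢
    linarith
  have c3 : α ≤ 2 → 1.1905 ≤ C := by
    intro h3
    refine le_trans ?_ (hzf 7)
    have : ∑ i ∈ Finset.range 7, (1 / ((i : ℝ) + 1) ^ 3)
        ≤ ∑ i ∈ Finset.range 7, ((i : ℝ) + 1) ^ (-(1 + α)) := by
      apply Finset.sum_le_sum
      intro i _
      have i0 : (0 : ℝ) ≤ i := Nat.cast_nonneg i
      have e' : 1 / ((i : ℝ) + 1) ^ 3 = ((i : ℝ) + 1) ^ (-3 : ℝ) := by
        rw [Real.rpow_neg (by linarith), one_div]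
        norm_cast
      rw [e']
      exact Real.rpow_le_rpow_of_exponent_le (by linarith) (by linarith)
    refine le_trans ?_ this
    simp only [Finset.sum_range_succ, Finset.sum_range_zero]
    norm_num
  have hC : 0 ≤ C := by linarith
  have hgap : ∀ h : ℝ, 0 < h → h ≤ 1 / 2 → h ≤ C * gapF h α := fun h h0 h1 =>
    gap_key α C h hα h0 h1 c1 c2 c3 c4
  have hrow := PK_row α C hα hC hgap hzf
  obtain ⟨sa, ta⟩ := half_bound α C hC hrow a ha
  obtain ⟨sb, tb⟩ := half_bound α C hC hrow b hb
  have sb' : Summable (fun p : ℕ+ × ℕ+ => b p.2 ^ 2 * PK α p.2 p.1) := sb.prod_symm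
  have tb' : ∑' p : ℕ+ × ℕ+, b p.2 ^ 2 * PK α p.2 p.1 ≤ C * ∑' n, b n ^ 2 := by
    rw [← (Equiv.prodComm ℕ+ ℕ+).tsum_eq]
    exact tb
  have ef : ∀ p : ℕ+ × ℕ+, (a p.1 * √(PK α p.1 p.2)) ^ (2 : ℝ) = a p.1 ^ 2 * PK α p.1 p.2 := by
    intro p
    rw [Real.rpow_two, mul_pow, Real.sq_sqrt (PK_nonneg _ _ _)]
  have eg : ∀ p : ℕ+ × ℕ+, (b p.2 * √(PK α p.2 p.1)) ^ (2 : ℝ) = b p.2 ^ 2 * PK α p.2 p.1 := by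
    intro p
    rw [Real.rpow_two, mul_pow, Real.sq_sqrt (PK_nonneg _ _ _)]
  have H := Real.summable_and_inner_le_Lp_mul_Lq_tsum_of_nonneg Real.HolderConjugate.two_two
    (f := fun p : ℕ+ × ℕ+ => a p.1 * √(PK α p.1 p.2))
    (g := fun p : ℕ+ × ℕ+ => b p.2 * √(PK α p.2 p.1))
    (fun p => mul_nonneg (ha0 _) (Real.sqrt_nonneg _))
    (fun p => mul_nonneg (hb0 _) (Real.sqrt_nonneg _))
    (by simpa only [ef] using sa) (by simpa only [eg] using sb')
  have efg : ∀ p : ℕ+ × ℕ+, a p.1 * √(PK α p.1 p.2) * (b p.2 * √(PK α p.2 p.1)) =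
      a p.1 * b p.2 * ((p.1 : ℝ) * (p.2 : ℝ)) ^ (α - 1/2) / (max (p.1 : ℝ) (p.2 : ℝ)) ^ (2*α) := by
    intro p
    rw [mul_div_assoc, ← PK_mul α p.1 p.2]
    ring
  simp only [ef, eg, efg, ← Real.sqrt_eq_rpow] at H
  obtain ⟨H1, H2⟩ := H
  refine ⟨H1, ?_⟩
  rw [← H1.tsum_prod]
  refine H2.trans ?_
  have q1 := Real.sqrt_le_sqrt ta
  have q2 := Real.sqrt_le_sqrt tb'
  refine (mul_le_mul q1 q2 (Real.sqrt_nonneg _) (Real.sqrt_nonneg _)).trans (le_of_eq ?_)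
  rw [Real.sqrt_mul hC, Real.sqrt_mul hC]
  have := Real.mul_self_sqrt hC
  linear_combination √(∑' n : ℕ+, a n ^ 2) * √(∑' n : ℕ+, b n ^ 2) * this
end

section
/- Let α > 0. Then the supremum over all integers m ≥ 1 of S_α(m) equals max(2/α, ζ(1+α)); that is, S_α(m) ≤ max(2/α, ζ(1+α)) for every integer m ≥ 1, and sup_{m≥1} S_α(m) = max(2/α, ζ(1+α)). -/
/-- `S α m = m^{-α} ∑_{n=1}^m n^{α-1} + m^{α} ∑_{n=m+1}^∞ n^{-α-1}`, where the tail sum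
over `n > m` is written as `∑_{k≥0} (m+1+k)^{-α-1}`. -/
noncomputable def S (α : ℝ) (m : ℕ+) : ℝ :=
  (m : ℝ) ^ (-α) * ∑ n ∈ Finset.Icc 1 (m : ℕ), (n : ℝ) ^ (α - 1) +
    (m : ℝ) ^ α * ∑' k : ℕ, ((m : ℝ) + 1 + (k : ℝ)) ^ (-α - 1)

lemma poly_aux0 (t : ℝ) (ht : 0 ≤ t) (ht2 : t ≤ 1/2) :
    0 ≤ (1+t)^9 - (1+9/5*t+18/25*t^2-6/125*t^3)^5 := by
  obtain ⟨y, hy⟩ : ∃ y : ℝ, y = 1 - 2*t := ⟨_, rfl⟩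
  have hy0 : 0 ≤ y := by linarith
  have key : (1+t)^9 - (1+9/5*t+18/25*t^2-6/125*t^3)^5 =
      t^4 * ((9/125)*t^0*y^11 + (6471/3125)*t^1*y^10 + (84282/3125)*t^2*y^9 + (3280698/15625)*t^3*y^8 + (84801501/78125)*t^4*y^7 + (1528227223/390625)*t^5*y^6 + (97952969712/9765625)*t^6*y^5 + (178624048164/9765625)*t^7*y^4 + (1135147612928/48828125)*t^8*y^3 + (4788083691744/244140625)*t^9*y^2 + (12063752269152/1220703125)*t^10*y^1 + (68768330233376/30517578125)*t^11*y^0) := by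
    rw [hy]; ring
  rw [key]; positivity

lemma poly_aux1 (t : ℝ) (ht : 0 ≤ t) (ht2 : t ≤ 1/2) :
    0 ≤ (1-9/5*t+18/25*t^2+6/125*t^3+1/50*t^4)^5 - (1-t)^9 := by
  obtain ⟨y, hy⟩ : ∃ y : ℝ, y = 1 - 2*t := ⟨_, rfl⟩
  have hy0 : 0 ≤ y := by linarith
  have key : (1-9/5*t+18/25*t^2+6/125*t^3+1/50*t^4)^5 - (1-t)^9 =
      t^4 * ((7/250)*t^0*y^16 + (2071/3125)*t^1*y^15 + (22743/3125)*t^2*y^14 + (768688/15625)*t^3*y^13 + (17889504/78125)*t^4*y^12 + (607583591/781250)*t^5*y^11 + (38913095551/19531250)*t^6*y^10 + (76647631333/19531250)*t^7*y^9 + (1172157310993/195312500)*t^8*y^8 + (3487597900853/488281250)*t^9*y^7 + (32158786009857/4882812500)*t^10*y^6 + (141879781900801/30517578125)*t^11*y^5 + (240079631539197/97656250000)*t^12*y^4 + (91709560948023/97656250000)*t^13*y^3 + (5946131937079/24414062500)*t^14*y^2 + (1861256774033/48828125000)*t^15*y^1 + (2627351780749/976562500000)*t^16*y^0) := by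
    rw [hy]; ring
  rw [key]; positivity

lemma poly_aux2 (t : ℝ) (ht : 0 ≤ t) (ht2 : t ≤ 1/2) :
    0 ≤ (1+9/5*t+18/25*t^2-6/125*t^3) - (1-9/5*t+18/25*t^2+6/125*t^3+1/50*t^4) - 9/10*t*(1+(1+9/5*t+18/25*t^2-6/125*t^3))*(1+(1-9/5*t+18/25*t^2+6/125*t^3+1/50*t^4)) := by
  obtain ⟨y, hy⟩ : ∃ y : ℝ, y = 1 - 2*t := ⟨_, rfl⟩
  have hy0 : 0 ≤ y := by linarith
  have key : (1+9/5*t+18/25*t^2-6/125*t^3) - (1-9/5*t+18/25*t^2+6/125*t^3+1/50*t^4) - 9/10*t*(1+(1+9/5*t+18/25*t^2-6/125*t^3))*(1+(1-9/5*t+18/25*t^2+6/125*t^3+1/50*t^4)) =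
      t^3 * ((57/250)*t^0*y^5 + (113/50)*t^1*y^4 + (51887/6250)*t^2*y^3 + (172239/12500)*t^3*y^2 + (1494149/156250)*t^4*y^1 + (243883/156250)*t^5*y^0) := by
    rw [hy]; ring
  rw [key]; positivity

lemma key95 (t : ℝ) (ht : 0 < t) (ht2 : t ≤ 1/2) :
    9/10*t ≤ 1/(1+(1-t)^(9/5:ℝ)) - 1/(1+(1+t)^(9/5:ℝ)) := by
  have h0 := poly_aux0 t ht.le ht2
  have h1 := poly_aux1 t ht.le ht2
  have h2 := poly_aux2 t ht.le ht2
  have e1 : ((1+t)^(9/5:ℝ))^5 = (1+t)^9 := by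
    rw [← Real.rpow_natCast, ← Real.rpow_mul (by linarith), ← Real.rpow_natCast]; norm_num
  have e2 : ((1-t)^(9/5:ℝ))^5 = (1-t)^9 := by
    rw [← Real.rpow_natCast, ← Real.rpow_mul (by linarith), ← Real.rpow_natCast]; norm_num
  have hP0 : 0 ≤ (1+t)^(9/5:ℝ) := Real.rpow_nonneg (by linarith) _
  have hQ0 : 0 ≤ (1-t)^(9/5:ℝ) := Real.rpow_nonneg (by linarith) _
  generalize (1+t)^(9/5:ℝ) = P at *
  generalize (1-t)^(9/5:ℝ) = Q at *
  have hq0 : 0 ≤ 1-9/5*t+18/25*t^2+6/125*t^3+1/50*t^4 := by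
    have : 0 ≤ t^3 := by positivity
    have : 0 ≤ t^4 := by positivity
    nlinarith
  have hp0 : 0 ≤ 1+9/5*t+18/25*t^2-6/125*t^3 := by
    have : 0 ≤ t^2 * (1-t) := mul_nonneg (by positivity) (by linarith)
    nlinarith
  have hP : 1+9/5*t+18/25*t^2-6/125*t^3 ≤ P :=
    le_of_pow_le_pow_left₀ (n := 5) (by norm_num) hP0 (by linarith)
  have hQ : Q ≤ 1-9/5*t+18/25*t^2+6/125*t^3+1/50*t^4 :=
    le_of_pow_le_pow_left₀ (n := 5) (by norm_num) hq0 (by linarith)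
  generalize 1+9/5*t+18/25*t^2-6/125*t^3 = p at *
  generalize 1-9/5*t+18/25*t^2+6/125*t^3+1/50*t^4 = q at *
  have a1 : 1/(1+q) ≤ 1/(1+Q) := one_div_le_one_div_of_le (by linarith) (by linarith)
  have a2 : 1/(1+P) ≤ 1/(1+p) := one_div_le_one_div_of_le (by linarith) (by linarith)
  have a3 : 9/10*t ≤ 1/(1+q) - 1/(1+p) := by
    rw [div_sub_div _ _ (by linarith) (by linarith), le_div_iff₀ (by positivity)]
    linarith
  linarith

lemma logistic_convex : ConvexOn ℝ (Set.Ici (0:ℝ)) (fun s => 1/(1+Real.exp s)) := by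
  have hd : ∀ s : ℝ, HasDerivAt (fun s => 1/(1+Real.exp s)) (-(Real.exp s)/(1+Real.exp s)^2) s := by
    intro s
    have hp := Real.exp_pos s
    have := ((Real.hasDerivAt_exp s).const_add 1).inv (by positivity)
    simp only [one_div]
    exact this
  apply MonotoneOn.convexOn_of_deriv (convex_Ici 0)
  · exact fun s _ => (hd s).continuousAt.continuousWithinAt
  · exact fun s _ => (hd s).differentiableAt.differentiableWithinAt
  · intro a ha b hb hab
    rw [interior_Ici, Set.mem_Ioi] at ha hb
    rw [(hd a).deriv, (hd b).deriv]
    have h1 : 1 ≤ Real.exp a := Real.one_le_exp ha.le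
    have h2 : Real.exp a ≤ Real.exp b := Real.exp_le_exp.mpr hab
    rw [div_le_div_iff₀ (by positivity) (by positivity)]
    generalize Real.exp a = x at *
    generalize Real.exp b = y at *
    have : 0 ≤ (y-x)*(x*y-1) := mul_nonneg (by linarith) (by nlinarith)
    nlinarith

lemma chord (x l : ℝ) (hx : 1 ≤ x) (hl : 0 ≤ l) (hl1 : l ≤ 1) :
    l*(1/2 - 1/(1+x)) ≤ 1/2 - 1/(1+x^l) := by
  have h := logistic_convex.2 (Set.mem_Ici.2 (le_refl (0:ℝ)))
    (Set.mem_Ici.2 (Real.log_nonneg hx)) (show 0 ≤ 1-l by linarith) hl (by ring)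
  have hx0 : 0 < x := by linarith
  simp only [smul_eq_mul, mul_zero, zero_add, Real.exp_zero, Real.exp_log hx0] at h
  rw [Real.rpow_def_of_pos hx0, mul_comm (Real.log x)]
  linarith

lemma key (α t : ℝ) (hα : 0 < α) (hα2 : α ≤ 9/5) (ht : 0 < t) (ht2 : t ≤ 1/2) :
    α*t/2 ≤ 1/(1+(1-t)^α) - 1/(1+(1+t)^α) := by
  have h := key95 t ht ht2
  have hl0 : 0 ≤ α*(5/9) := by positivity
  have hl1 : α*(5/9) ≤ 1 := by linarith
  have hP : 1 ≤ (1+t)^(9/5:ℝ) := Real.one_le_rpow (by linarith) (by norm_num)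
  have hQ : 0 < (1-t)^(9/5:ℝ) := Real.rpow_pos_of_pos (by linarith) _
  have hQ1 : (1-t)^(9/5:ℝ) ≤ 1 := Real.rpow_le_one (by linarith) (by linarith) (by norm_num)
  have c1 := chord _ _ hP hl0 hl1
  have c2 := chord _ _ ((one_le_inv₀ hQ).2 hQ1) hl0 hl1
  have e : (9/5:ℝ) * (α*(5/9)) = α := by ring
  rw [Real.inv_rpow hQ.le] at c2
  rw [← Real.rpow_mul (by linarith), e] at c1 c2
  have hQ' : 0 < (1-t)^α := Real.rpow_pos_of_pos (by linarith) _
  have f : ∀ y : ℝ, 0 < y → 1/(1+y⁻¹) = 1 - 1/(1+y) := by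
    intro y hy; field_simp; ring
  rw [f _ hQ, f _ hQ'] at c2
  nlinarith

lemma tele_step (α n : ℝ) (hα : 0 < α) (hα2 : α ≤ 9/5) (hn : 2 ≤ n) :
    n^(-α-1) ≤ (2/α)/(n^α+(n-1)^α) - (2/α)/((n+1)^α+n^α) := by
  have hn0 : 0 < n := by linarith
  have k := key α (1/n) hα hα2 (by positivity) (by
    apply one_div_le_one_div_of_le <;> linarith)
  have e1 : 1 - 1/n = (n-1)/n := by field_simp
  have e2 : 1 + 1/n = (n+1)/n := by field_simp
  rw [e1, e2, Real.div_rpow (by linarith) hn0.le, Real.div_rpow (by linarith) hn0.le] at k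
  have hN : 0 < n^α := Real.rpow_pos_of_pos hn0 _
  have hN1 : 0 < (n-1)^α := Real.rpow_pos_of_pos (by linarith) _
  have hN2 : 0 < (n+1)^α := Real.rpow_pos_of_pos (by linarith) _
  have e3 : n^(-α-1) = 1/(n^α * n) := by
    rw [Real.rpow_sub_one hn0.ne', Real.rpow_neg hn0.le]; field_simp
  rw [e3]
  generalize n^α = N at *
  generalize (n-1)^α = X at *
  generalize (n+1)^α = Y at *
  have k2 := mul_le_mul_of_nonneg_left k (show 0 ≤ 2/(α*N) by positivity)
  have l1 : 2/(α*N) * (α*(1/n)/2) = 1/(N*n) := by field_simp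
  have l2 : 2/(α*N) * (1/(1+X/N) - 1/(1+Y/N)) = (2/α)/(N+X) - (2/α)/(Y+N) := by
    rw [show 1 + X/N = (N+X)/N by field_simp, show 1+Y/N = (Y+N)/N by field_simp; ring]
    field_simp
  rwa [l1, l2] at k2

lemma tsum_tele_le (f g : ℕ → ℝ) (hf : ∀ k, 0 ≤ f k) (hg : ∀ k, 0 ≤ g k)
    (h : ∀ k, f k ≤ g k - g (k+1)) : ∑' k, f k ≤ g 0 := by
  apply Real.tsum_le_of_sum_range_le hf
  intro n
  have : ∑ i ∈ Finset.range n, f i ≤ ∑ i ∈ Finset.range n, (g i - g (i+1)) :=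
    Finset.sum_le_sum (fun i _ => h i)
  rw [Finset.sum_range_sub'] at this
  linarith [hg n]

noncomputable def TT (α : ℝ) (m : ℕ) : ℝ := ∑' k : ℕ, ((m : ℝ) + 1 + (k : ℝ)) ^ (-α - 1)
noncomputable def AA (α : ℝ) (m : ℕ) : ℝ := ∑ n ∈ Finset.Icc 1 m, (n : ℝ) ^ (α - 1)

lemma TT_le (α : ℝ) (m : ℕ) (hα : 0 < α) (hα2 : α ≤ 9/5) (hm : 1 ≤ m) :
    TT α m ≤ (2/α)/(((m:ℝ)+1)^α+(m:ℝ)^α) := by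
  have hm' : (1:ℝ) ≤ m := by exact_mod_cast hm
  have := tsum_tele_le (fun k : ℕ => ((m : ℝ) + 1 + (k : ℝ)) ^ (-α - 1))
    (fun k : ℕ => (2/α)/(((m:ℝ)+1+k)^α+((m:ℝ)+k)^α)) (fun k => by positivity)
    (fun k => by positivity) (fun k => by
      have := tele_step α ((m:ℝ)+1+k) hα hα2 (by have : (0:ℝ) ≤ k := k.cast_nonneg
                                                 linarith)
      push_cast
      convert this using 5 <;> ring)
  simpa [TT] using this

lemma summ (α : ℝ) (m : ℕ) (hα : 0 < α) :
    Summable (fun k : ℕ => ((m : ℝ) + 1 + (k : ℝ)) ^ (-α - 1)) := by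
  have h := (summable_nat_add_iff (m+1)).2 (Real.summable_nat_rpow (p := -α-1) |>.2 (by linarith))
  refine h.congr (fun k => ?_)
  push_cast
  ring_nf

lemma TT_succ (α : ℝ) (m : ℕ) (hα : 0 < α) :
    TT α m = ((m:ℝ)+1)^(-α-1) + TT α (m+1) := by
  unfold TT
  rw [(summ α m hα).tsum_eq_zero_add]
  simp only [Nat.cast_zero, add_zero]
  congr 2
  ext k
  push_cast
  ring_nf

lemma AA_succ (α : ℝ) (m : ℕ) : AA α (m+1) = AA α m + ((m:ℝ)+1)^(α-1) := by
  unfold AA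
  rw [Finset.sum_Icc_succ_top (by omega)]
  push_cast
  rfl

lemma h_anti (α : ℝ) (m : ℕ) (hα : 0 < α) (hα2 : α ≤ 9/5) (hm : 1 ≤ m) :
    AA α (m+1) + (((m:ℝ)+1)^α)^2 * TT α (m+1) - 2*((m:ℝ)+1)^α/α ≤
    AA α m + ((m:ℝ)^α)^2 * TT α m - 2*(m:ℝ)^α/α := by
  have hm0 : (0:ℝ) < m := by exact_mod_cast hm
  have hT := TT_le α m hα hα2 hm
  have hs := TT_succ α m hα
  have hM1 : 0 < ((m:ℝ)+1) := by linarith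
  have e1 : (((m:ℝ)+1)^α)^2 * ((m:ℝ)+1)^(-α-1) = ((m:ℝ)+1)^(α-1) := by
    rw [pow_two, ← Real.rpow_add hM1, ← Real.rpow_add hM1]; ring_nf
  rw [AA_succ]
  have hX : 0 < (m:ℝ)^α := by positivity
  have hXY : (m:ℝ)^α ≤ ((m:ℝ)+1)^α := Real.rpow_le_rpow hm0.le (by linarith) hα.le
  have hs' : TT α (m+1) = TT α m - ((m:ℝ)+1)^(-α-1) := by linarith
  rw [hs', mul_sub, e1]
  generalize (m:ℝ)^α = X at *
  generalize ((m:ℝ)+1)^α = Y at *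
  rw [le_div_iff₀ (by linarith)] at hT
  have := mul_le_mul_of_nonneg_right hT (show 0 ≤ Y - X by linarith)
  have e2 : 2*Y/α = 2/α*Y := by ring
  have e3 : 2*X/α = 2/α*X := by ring
  rw [e2, e3]
  nlinarith

lemma h_le (α : ℝ) (m : ℕ) (hα : 0 < α) (hα2 : α ≤ 9/5) (hm : 1 ≤ m) :
    AA α m + ((m:ℝ)^α)^2 * TT α m - 2*(m:ℝ)^α/α ≤ 1 + TT α 1 - 2/α := by
  induction m, hm using Nat.le_induction with
  | base => simp [AA]
  | succ m hm ih =>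
    have := h_anti α m hα hα2 hm
    push_cast
    linarith

lemma tsum_eq_TT (α : ℝ) (hα : 0 < α) :
    (∑' n : ℕ+, (n : ℝ) ^ (-(1+α))) = TT α 0 := by
  have := tsum_pnat_eq_tsum_succ (f := fun n : ℕ => (n:ℝ)^(-(1+α)))
  rw [this]
  unfold TT
  congr 1
  ext k
  push_cast
  congr 1 <;> ring

lemma TT_zero (α : ℝ) (hα : 0 < α) : TT α 0 = 1 + TT α 1 := by
  rw [TT_succ α 0 hα]; simp

lemma S_eq (α : ℝ) (m : ℕ+) :
    S α m = ((m:ℕ):ℝ)^(-α) * AA α m + ((m:ℕ):ℝ)^α * TT α m := rfl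

lemma TT_nonneg (α : ℝ) (m : ℕ) : 0 ≤ TT α m := tsum_nonneg (fun k => by positivity)

lemma S_one (α : ℝ) (hα : 0 < α) : S α 1 = TT α 0 := by
  rw [S_eq, TT_zero α hα]; simp [AA]

lemma small_case (α : ℝ) (m : ℕ+) (hα : 0 < α) (hα2 : α ≤ 9/5) :
    S α m ≤ max (2/α) (TT α 0) := by
  have h := h_le α m hα hα2 m.pos
  rw [S_eq, TT_zero α hα]
  have hm1 : (1:ℝ) ≤ (m:ℕ) := by exact_mod_cast m.pos
  generalize ((m:ℕ):ℝ) = x at *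
  have hX : 1 ≤ x^α := Real.one_le_rpow hm1 hα.le
  rw [Real.rpow_neg (by linarith)]
  generalize x^α = X at *
  have hX0 : 0 < X := by linarith
  have e : X⁻¹ * AA α m + X * TT α m - 2/α = X⁻¹ * (AA α m + X^2 * TT α m - 2*X/α) := by
    field_simp
  have h3 : X⁻¹ ≤ 1 := inv_le_one_of_one_le₀ hX
  have h4 : 0 < X⁻¹ := by positivity
  have h2 : X⁻¹ * AA α m + X * TT α m - 2/α ≤ X⁻¹ * (1 + TT α 1 - 2/α) := by
    rw [e]; exact mul_le_mul_of_nonneg_left h h4.le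
  rcases le_total (1 + TT α 1) (2/α) with hc | hc
  · apply le_max_of_le_left
    nlinarith
  · apply le_max_of_le_right
    nlinarith

lemma AA_norm (α : ℝ) (m : ℕ) (hm : 1 ≤ m) :
    (m:ℝ)^(-α) * AA α m = (∑ n ∈ Finset.Icc 1 m, ((n:ℝ)/m)^(α-1)) / m := by
  have hm0 : (0:ℝ) < m := by exact_mod_cast hm
  unfold AA
  rw [Finset.mul_sum, Finset.sum_div]
  refine Finset.sum_congr rfl (fun n hn => ?_)
  rw [Real.div_rpow (by positivity) hm0.le, Real.rpow_sub_one hm0.ne', Real.rpow_neg hm0.le]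
  field_simp

lemma sum1 (m : ℕ) : ∑ n ∈ Finset.Icc 1 m, (n:ℝ) = m*(m+1)/2 := by
  induction m with
  | zero => simp
  | succ m ih => rw [Finset.sum_Icc_succ_top (by omega), ih]; push_cast; ring

lemma sum2 (m : ℕ) : ∑ n ∈ Finset.Icc 1 m, (n:ℝ)^2 = m*(m+1)*(2*m+1)/6 := by
  induction m with
  | zero => simp
  | succ m ih => rw [Finset.sum_Icc_succ_top (by omega), ih]; push_cast; ring

lemma A_bound (α : ℝ) (m : ℕ) (hm : 1 ≤ m) (f : ℝ → ℝ)
    (hf : ∀ r : ℝ, 0 < r → r ≤ 1 → r^(α-1) ≤ f r) :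
    (m:ℝ)^(-α) * AA α m ≤ (∑ n ∈ Finset.Icc 1 m, f ((n:ℝ)/m)) / m := by
  have hm0 : (0:ℝ) < m := by exact_mod_cast hm
  rw [AA_norm α m hm]
  gcongr with n hn
  rw [Finset.mem_Icc] at hn
  have h1 : (0:ℝ) < n := by exact_mod_cast hn.1
  have h2 : (n:ℝ) ≤ m := by exact_mod_cast hn.2
  exact hf _ (by positivity) ((div_le_one hm0).2 h2)

lemma A95 (α : ℝ) (m : ℕ) (hm : 1 ≤ m) (hα : 9/5 ≤ α) :
    (m:ℝ)^(-α) * AA α m ≤ 3/5 + 2/5*(1/m) := by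
  have hm0 : (0:ℝ) < m := by exact_mod_cast hm
  refine (A_bound α m hm (fun r => 1/5 + 4/5*r) ?_).trans ?_
  · intro r h0 h1
    have a : r^(α-1) ≤ r^(4/5:ℝ) := Real.rpow_le_rpow_of_exponent_ge h0 h1 (by linarith)
    have b := Real.geom_mean_le_arith_mean2_weighted (w₁ := 1/5) (w₂ := 4/5) (p₁ := 1) (p₂ := r)
      (by norm_num) (by norm_num) (by norm_num) h0.le (by norm_num)
    simp only [Real.one_rpow, one_mul, mul_one] at b
    linarith
  · have e : ∑ n ∈ Finset.Icc 1 m, (n:ℝ)/m = (m*(m+1)/2)/m := by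
      rw [← Finset.sum_div, sum1]
    rw [Finset.sum_add_distrib, ← Finset.mul_sum, e]
    simp only [Finset.sum_const, Nat.card_Icc, add_tsub_cancel_right, nsmul_eq_mul]
    apply le_of_eq
    field_simp
    ring

lemma A2 (α : ℝ) (m : ℕ) (hm : 1 ≤ m) (hα : 2 ≤ α) :
    (m:ℝ)^(-α) * AA α m ≤ 1/2 + 1/2*(1/m) := by
  have hm0 : (0:ℝ) < m := by exact_mod_cast hm
  refine (A_bound α m hm (fun r => r) ?_).trans ?_
  · intro r h0 h1
    have a : r^(α-1) ≤ r^(1:ℝ) := Real.rpow_le_rpow_of_exponent_ge h0 h1 (by linarith)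
    simpa using a
  · rw [← Finset.sum_div, sum1]
    apply le_of_eq
    field_simp

lemma A3 (α : ℝ) (m : ℕ) (hm : 1 ≤ m) (hα : 3 ≤ α) :
    (m:ℝ)^(-α) * AA α m ≤ (1+1/m)*(2+1/m)/6 := by
  have hm0 : (0:ℝ) < m := by exact_mod_cast hm
  refine (A_bound α m hm (fun r => r^2) ?_).trans ?_
  · intro r h0 h1
    have a : r^(α-1) ≤ r^(2:ℝ) := Real.rpow_le_rpow_of_exponent_ge h0 h1 (by linarith)
    simpa using a
  · simp only [div_pow]
    rw [← Finset.sum_div, sum2]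
    apply le_of_eq
    field_simp

lemma T_mono (α β : ℝ) (m : ℕ) (hm : 1 ≤ m) (hβ : 0 < β) (h : β ≤ α) :
    (m:ℝ)^α * TT α m ≤ (m:ℝ)^β * TT β m := by
  have hm0 : (0:ℝ) < m := by exact_mod_cast hm
  unfold TT
  rw [← tsum_mul_left, ← tsum_mul_left]
  refine Summable.tsum_le_tsum (fun k => ?_) ((summ α m (by linarith)).mul_left _)
    ((summ β m hβ).mul_left _)
  have hk : (0:ℝ) ≤ k := k.cast_nonneg
  have hmk : (m:ℝ) ≤ (m:ℝ)+1+k := by linarith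
  generalize (m:ℝ)+1+k = n at *
  have hn : 0 < n := by linarith
  have f : ∀ γ : ℝ, (m:ℝ)^γ * n^(-γ-1) = ((m:ℝ)/n)^γ / n := by
    intro γ
    rw [Real.div_rpow hm0.le hn.le, Real.rpow_sub_one hn.ne', Real.rpow_neg hn.le]
    field_simp
  rw [f, f]
  gcongr ?_ / _
  exact Real.rpow_le_rpow_of_exponent_ge (by positivity) ((div_le_one hn).2 hmk) h

lemma T95 (α : ℝ) (m : ℕ) (hm : 1 ≤ m) (hα : 9/5 ≤ α) :
    (m:ℝ)^α * TT α m ≤ (10/9)/(2+9/5*(1/m)) := by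
  have hm0 : (0:ℝ) < m := by exact_mod_cast hm
  refine (T_mono α (9/5) m hm (by norm_num) hα).trans ?_
  have h := TT_le (9/5) m (by norm_num) le_rfl hm
  have b := one_add_mul_self_le_rpow_one_add (s := 1/(m:ℝ)) (p := 9/5)
    (by have : 0 < 1/(m:ℝ) := by positivity
        linarith) (by norm_num)
  rw [show 1 + 1/(m:ℝ) = ((m:ℝ)+1)/m by field_simp,
    Real.div_rpow (by positivity) hm0.le] at b
  have hX : 0 < (m:ℝ)^(9/5:ℝ) := by positivity
  generalize (m:ℝ)^(9/5:ℝ) = X at *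
  have hY : 0 < ((m:ℝ)+1)^(9/5:ℝ) := by positivity
  generalize ((m:ℝ)+1)^(9/5:ℝ) = Y at *
  calc X * TT (9/5) m ≤ X * (2/(9/5)/(Y+X)) := by gcongr
    _ = (10/9)/(1+Y/X) := by field_simp; ring
    _ ≤ _ := by
      apply div_le_div_of_nonneg_left (by norm_num) (by positivity)
      linarith

lemma T2 (α : ℝ) (m : ℕ) (hm : 1 ≤ m) (hα : 2 ≤ α) :
    (m:ℝ)^α * TT α m ≤ 1/(2*(1+1/2*(1/m))^2) := by
  have hm0 : (0:ℝ) < m := by exact_mod_cast hm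
  refine (T_mono α 2 m hm (by norm_num) hα).trans ?_
  have h := tsum_tele_le (fun k : ℕ => ((m : ℝ) + 1 + (k : ℝ)) ^ (-2 - 1:ℝ))
    (fun k : ℕ => 1/(2*((m:ℝ)+1/2+k)^2)) (fun k => by positivity)
    (fun k => by positivity) (fun k => by
      have hk : (0:ℝ) ≤ k := k.cast_nonneg
      push_cast
      obtain ⟨n, hn⟩ : ∃ n : ℝ, n = (m:ℝ)+1+k := ⟨_, rfl⟩
      have hn1 : 1 ≤ n := by linarith
      rw [← hn, show (m:ℝ)+1/2+k = n - 1/2 by linarith,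
        show (m:ℝ)+1/2+(k+1) = n + 1/2 by linarith,
        show (-2-1:ℝ) = -((3:ℕ):ℝ) by norm_num, Real.rpow_neg (by linarith), Real.rpow_natCast]
      have h1 : 0 < n - 1/2 := by linarith
      rw [div_sub_div _ _ (by positivity) (by positivity), inv_eq_one_div,
        div_le_div_iff₀ (by positivity) (by positivity)]
      nlinarith [sq_nonneg n, sq_nonneg (n^2)])
  simp only [Nat.cast_zero, add_zero] at h
  calc (m:ℝ)^(2:ℝ) * TT 2 m ≤ (m:ℝ)^(2:ℝ) * (1/(2*((m:ℝ)+1/2)^2)) := by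
        unfold TT; gcongr
    _ = _ := by
      rw [Real.rpow_two]; field_simp; try ring

lemma TT_lower (α : ℝ) (c N : ℕ) (hα : 0 < α) (hα2 : α + 1 ≤ c) :
    ∑ k ∈ Finset.range N, (((1+k:ℝ))^c)⁻¹ ≤ TT α 0 := by
  refine le_trans ?_ ((summ α 0 hα).sum_le_tsum (Finset.range N) (fun k _ => by positivity))
  refine Finset.sum_le_sum (fun k _ => ?_)
  have hk : (0:ℝ) ≤ k := k.cast_nonneg
  rw [← Real.rpow_natCast, ← Real.rpow_neg (by positivity)]
  simp only [Nat.cast_zero, zero_add]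
  exact Real.rpow_le_rpow_of_exponent_le (by linarith) (by linarith)

lemma big_case (α : ℝ) (m : ℕ+) (hα : 9/5 ≤ α) : S α m ≤ TT α 0 := by
  have hα0 : 0 < α := by linarith
  by_cases hm1 : m = 1
  · rw [hm1, S_one α hα0]
  have hm2 : 2 ≤ (m:ℕ) := by
    have : (m:ℕ) ≠ 1 := by simpa using hm1
    have := m.pos
    omega
  rw [S_eq]
  generalize (m:ℕ) = m at *
  have hm : 1 ≤ m := by omega
  have hm' : (2:ℝ) ≤ m := by exact_mod_cast hm2
  have a1 := A95 α m hm hα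
  have a2 := A2 α m hm
  have a3 := A3 α m hm
  have t1 := T95 α m hm hα
  have t2 := T2 α m hm
  have hv : 1/(m:ℝ) ≤ 1/2 := one_div_le_one_div_of_le (by norm_num) hm'
  have hv0 : 0 < 1/(m:ℝ) := by positivity
  generalize 1/(m:ℝ) = v at *
  rcases le_total α 2 with h2 | h2
  · have l := TT_lower α 3 6 hα0 (by norm_num; linarith)
    norm_num [Finset.sum_range_succ] at l
    have : (10/9)/(2+9/5*v) ≤ 5/9 - 17/50 * v := by
      rw [div_le_iff₀ (by linarith)]; nlinarith
    linarith
  · have t2 := t2 h2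
    have t2' : 1/(2*(1+1/2*v)^2) ≤ 1/2 - 9/25*v := by
      rw [div_le_iff₀ (by positivity)]; nlinarith [mul_nonneg hv0.le (sub_nonneg.2 hv), mul_nonneg (mul_nonneg hv0.le hv0.le) (sub_nonneg.2 hv)]
    rcases le_total α 3 with h3 | h3
    · have l := TT_lower α 4 4 hα0 (by norm_num; linarith)
      norm_num [Finset.sum_range_succ] at l
      have := a2 h2
      linarith
    · have l1 : 1 ≤ TT α 0 := by rw [TT_zero α hα0]; linarith [TT_nonneg α 1]
      have := a3 h3
      nlinarith

lemma neg_bern (x α : ℝ) (hx : 0 ≤ x) (hα : 0 < α) : 1 - α*x ≤ (1+x)^(-α) := by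
  rw [Real.rpow_def_of_pos (by linarith)]
  have h1 : Real.log (1+x) ≤ x := by
    have := Real.log_le_sub_one_of_pos (show 0 < 1+x by linarith); linarith
  have h2 := Real.add_one_le_exp (Real.log (1+x) * -α)
  nlinarith

lemma T_lower (α : ℝ) (m : ℕ) (hα : 0 < α) : ((m:ℝ)+1)^(-α)/α ≤ TT α m := by
  have hs := (summ α m hα).hasSum.tendsto_sum_nat
  have hstep : ∀ k : ℕ, ((m:ℝ)+1+k)^(-α)/α - ((m:ℝ)+1+(k+1:ℕ))^(-α)/α ≤
      ((m:ℝ)+1+k)^(-α-1) := by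
    intro k
    push_cast
    have hn : 0 < (m:ℝ)+1+k := by positivity
    rw [← add_assoc]
    generalize (m:ℝ)+1+k = n at *
    have b := neg_bern (1/n) α (by positivity) hα
    rw [show 1+1/n = (n+1)/n by field_simp, Real.div_rpow (by linarith) hn.le] at b
    rw [Real.rpow_sub_one hn.ne']
    have hX : 0 < n^(-α) := by positivity
    generalize n^(-α) = X at *
    generalize (n+1)^(-α) = Y at *
    rw [le_div_iff₀ hX] at b
    rw [← sub_div, div_le_iff₀ hα]
    have : X / n * α = α*(1/n)*X := by ring
    linarith
  have hpart : ∀ N : ℕ, ((m:ℝ)+1)^(-α)/α - ((m:ℝ)+1+N)^(-α)/α ≤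
      ∑ k ∈ Finset.range N, ((m:ℝ)+1+k)^(-α-1) := by
    intro N
    have := Finset.sum_le_sum (s := Finset.range N) (fun k _ => hstep k)
    rw [Finset.sum_range_sub' (fun k : ℕ => ((m:ℝ)+1+k)^(-α)/α)] at this
    simpa using this
  have hlim : Filter.Tendsto (fun N : ℕ => ((m:ℝ)+1)^(-α)/α - ((m:ℝ)+1+N)^(-α)/α)
      Filter.atTop (nhds (((m:ℝ)+1)^(-α)/α - 0/α)) := by
    refine tendsto_const_nhds.sub (Filter.Tendsto.div_const ?_ _)
    exact (tendsto_rpow_neg_atTop hα).comp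
      (Filter.tendsto_atTop_add_const_left _ _ tendsto_natCast_atTop_atTop)
  have := le_of_tendsto_of_tendsto' hlim hs hpart
  unfold TT
  simpa using this

lemma A_lower (α : ℝ) (m : ℕ) (hα : 0 < α) : ((m:ℝ)^α - 1)/α ≤ AA α m := by
  rcases le_total 1 α with h | h
  · have : (m:ℝ)^α/α ≤ AA α m := by
      induction m with
      | zero => simp [AA, Real.zero_rpow hα.ne']
      | succ m ih =>
        rw [AA_succ]
        push_cast
        have hn : 0 < (m:ℝ)+1 := by positivity
        have b := one_add_mul_self_le_rpow_one_add (s := -(1/((m:ℝ)+1))) (p := α)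
          (by rw [neg_le_neg_iff, div_le_one hn]; linarith [(m.cast_nonneg : (0:ℝ) ≤ m)]) h
        rw [show 1 + -(1/((m:ℝ)+1)) = (m:ℝ)/((m:ℝ)+1) by field_simp; ring,
          Real.div_rpow (by positivity) hn.le, le_div_iff₀ (by positivity)] at b
        have e : ((m:ℝ)+1)^α/α - ((m:ℝ))^α/α ≤ ((m:ℝ)+1)^(α-1) := by
          rw [← sub_div, div_le_iff₀ hα, Real.rpow_sub_one hn.ne']
          have : ((m:ℝ)+1)^α/((m:ℝ)+1)*α = α*(1/((m:ℝ)+1))*((m:ℝ)+1)^α := by ring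
          linarith
        linarith
    refine le_trans ?_ this
    gcongr
    linarith
  · have : (((m:ℝ)+1)^α-1)/α ≤ AA α m := by
      induction m with
      | zero => simp [AA]
      | succ m ih =>
        rw [AA_succ]
        push_cast
        have hn : 0 < (m:ℝ)+1 := by positivity
        have b := rpow_one_add_le_one_add_mul_self (s := (1/((m:ℝ)+1))) (p := α)
          (by have : 0 < 1/((m:ℝ)+1) := by positivity
              linarith) hα.le h
        rw [show 1 + (1/((m:ℝ)+1)) = ((m:ℝ)+1+1)/((m:ℝ)+1) by field_simp,
          Real.div_rpow (by positivity) hn.le, div_le_iff₀ (by positivity)] at b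
        have e : ((m:ℝ)+1+1)^α/α - ((m:ℝ)+1)^α/α ≤ ((m:ℝ)+1)^(α-1) := by
          rw [← sub_div, div_le_iff₀ hα, Real.rpow_sub_one hn.ne']
          have : ((m:ℝ)+1)^α/((m:ℝ)+1)*α = α*(1/((m:ℝ)+1))*((m:ℝ)+1)^α := by ring
          linarith
        rw [sub_div] at ih ⊢
        linarith
    refine le_trans ?_ this
    gcongr
    linarith

lemma S_lower (α : ℝ) (m : ℕ+) (hα : 0 < α) :
    (1 - ((m:ℕ):ℝ)^(-α))/α + (1 - α*(1/((m:ℕ):ℝ)))/α ≤ S α m := by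
  rw [S_eq]
  have hm0 : (0:ℝ) < (m:ℕ) := by exact_mod_cast m.pos
  have a := A_lower α m hα
  have t := T_lower α m hα
  generalize (m:ℕ) = m at *
  have b := neg_bern (1/(m:ℝ)) α (by positivity) hα
  rw [show 1+1/(m:ℝ) = ((m:ℝ)+1)/m by field_simp, Real.div_rpow (by linarith) hm0.le,
    Real.rpow_neg hm0.le] at b
  rw [Real.rpow_neg hm0.le]
  have hX : 0 < (m:ℝ)^α := by positivity
  generalize (m:ℝ)^α = X at *
  refine add_le_add ?_ ?_
  · calc (1-X⁻¹)/α = X⁻¹ * ((X-1)/α) := by field_simp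
      _ ≤ _ := by gcongr
  · calc (1 - α*(1/(m:ℝ)))/α ≤ (((m:ℝ)+1)^(-α)/X⁻¹)/α := by gcongr
      _ = X * (((m:ℝ)+1)^(-α)/α) := by field_simp
      _ ≤ _ := by gcongr

theorem sup_S_eq_max (α : ℝ) (hα : 0 < α) :
    (∀ m : ℕ+, S α m ≤ max (2/α) (∑' n : ℕ+, (n : ℝ) ^ (-(1+α)))) ∧
    (⨆ m : ℕ+, S α m) = max (2/α) (∑' n : ℕ+, (n : ℝ) ^ (-(1+α))) := by
  rw [tsum_eq_TT α hα]
  have hub : ∀ m : ℕ+, S α m ≤ max (2/α) (TT α 0) := by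
    intro m
    rcases le_total α (9/5) with h | h
    · exact small_case α m hα h
    · exact le_max_of_le_right (big_case α m h)
  have hbdd : BddAbove (Set.range (fun m : ℕ+ => S α m)) :=
    ⟨_, by rintro _ ⟨m, rfl⟩; exact hub m⟩
  refine ⟨hub, le_antisymm (ciSup_le hub) (max_le ?_ ?_)⟩
  · have hlim : Filter.Tendsto (fun N : ℕ => (1 - (N:ℝ)^(-α))/α + (1 - α*(1/(N:ℝ)))/α)
        Filter.atTop (nhds ((1-0)/α + (1-α*0)/α)) := by
      refine Filter.Tendsto.add (Filter.Tendsto.div_const (tendsto_const_nhds.sub ?_) _)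
        (Filter.Tendsto.div_const (tendsto_const_nhds.sub (Filter.Tendsto.const_mul _ ?_)) _)
      · exact (tendsto_rpow_neg_atTop hα).comp tendsto_natCast_atTop_atTop
      · exact tendsto_one_div_atTop_nhds_zero_nat
    have e : (1-0)/α + (1-α*0)/α = 2/α := by ring
    rw [e] at hlim
    refine le_of_tendsto hlim ?_
    filter_upwards [Filter.eventually_ge_atTop 1] with N hN
    exact (S_lower α ⟨N, hN⟩ hα).trans (le_ciSup hbdd _)
  · rw [← S_one α hα]
    exact le_ciSup hbdd 1
end
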